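/- Suppose X ⊆ W is a block subspace, (y_0,y_1,…) is a block sequence in W, α < ω₁ and K ≥ 1. Assume that player II has a strategy in F^{ω·α}_X to play outcomes (x_0,…,x_k) satisfying (x_0,…,x_k) ∼_K (y_0,…,y_k). Then for any block sequence (z_n) of vectors in the span [y_n], II has a strategy in F^α_X to play outcomes (v_0,…,v_k) satisfying (v_0,…,v_k) ∼_K (z_0,…,z_k). -/

import Mathlib

open Filter Topology

namespace Rosendal

variable {𝒲 : Type} [NormedAddCommGroup 𝒲] [NormedSpace ℝ 𝒲]

/-- `(e n)` is a Schauder basis of the Banach space `𝒲`. -/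
def IsSchauderBasis (e : ℕ → 𝒲) : Prop :=
  ∀ x : 𝒲, ∃! a : ℕ → ℝ,
    Tendsto (fun N => ∑ i ∈ Finset.range N, a i • e i) atTop (𝓝 x)

/-- `x` is a linear combination of the vectors `b i`, `i ∈ s`. -/
def SuppIn (b : ℕ → 𝒲) (x : 𝒲) (s : Finset ℕ) : Prop :=
  ∃ a : ℕ → ℝ, x = ∑ i ∈ s, a i • b i

/-- `(x i)_{i<k} ∼_K (y i)_{i<k}`. -/
def SeqEquiv (K : ℝ) (k : ℕ) (x y : ℕ → 𝒲) : Prop :=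
  ∀ a : ℕ → ℝ,
    (1 / K) * ‖∑ i ∈ Finset.range k, a i • x i‖ ≤ ‖∑ i ∈ Finset.range k, a i • y i‖ ∧
    ‖∑ i ∈ Finset.range k, a i • y i‖ ≤ K * ‖∑ i ∈ Finset.range k, a i • x i‖

/-- The outcome `l = (x 0, …, x k)` satisfies `(x 0, …, x k) ∼_K (y 0, …, y k)`. -/
def OutcomeEquiv (K : ℝ) (l : List 𝒲) (y : ℕ → 𝒲) : Prop :=
  SeqEquiv K l.length (fun i => l.getD i 0) y

/-- The outcome `l = (u 0, v 0, u 1, v 1, …, u k, v k)` satisfies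
`(u 0, …, u k) ∼_K (v 0, …, v k)`. -/
def PairOutcomeEquiv (K : ℝ) (l : List 𝒲) : Prop :=
  SeqEquiv K (l.length / 2) (fun i => l.getD (2 * i) 0) (fun i => l.getD (2 * i + 1) 0)

/-- The tree `T((x n), Y, K)`. -/
def embTree (x : ℕ → 𝒲) (Y : Set 𝒲) (K : ℝ) : Set (List 𝒲) :=
  {l | (∀ v ∈ l, v ∈ Y) ∧ SeqEquiv K l.length (fun i => l.getD i 0) x}

open Classical in
/-- The rank of a tree of finite sequences; `⊤ = ∞` if it is ill-founded. -/
noncomputable def treeRank (T : Set (List 𝒲)) : WithTop Ordinal :=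
  if h : WellFounded (fun t s : T => s.val <+: t.val ∧ s.val ≠ t.val) then
    ((⨆ s : T, Order.succ ((h.apply s).rank) : Ordinal) : WithTop Ordinal)
  else ⊤

open Classical in
/-- The embeddability index `Emb((x n), Y) = sup_{K ≥ 1} rank T((x n), Y, K)`. -/
noncomputable def embIndex (x : ℕ → 𝒲) (Y : Set 𝒲) : WithTop Ordinal :=
  if ∃ K : ℝ, 1 ≤ K ∧ treeRank (embTree x Y K) = ⊤ then ⊤
  else ((sSup {o : Ordinal | ∃ K : ℝ, 1 ≤ K ∧
      (o : WithTop Ordinal) = treeRank (embTree x Y K)} : Ordinal) : WithTop Ordinal)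

/-- `(I m)` is a sequence of successive nonempty finite intervals `I 0 < I 1 < …` of `ℕ`. -/
def IntervalSeq (I : ℕ → Finset ℕ) : Prop :=
  (∀ m, ∃ a b : ℕ, a ≤ b ∧ I m = Finset.Icc a b) ∧
  ∀ m, ∀ i ∈ I m, ∀ j ∈ I (m + 1), i < j

/-- The setting of Section 2 of the paper: a Banach space `𝒲` with a Schauder basis
`(e n)`, a countable subfield `𝔽 ⊆ ℝ` closed under the norms of finite `𝔽`-linear
combinations of the basis, and the countable `𝔽`-vector space `W` spanned by `(e n)`. -/
structure Frame (𝒲 : Type) [NormedAddCommGroup 𝒲] [NormedSpace ℝ 𝒲] : Type where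
  e : ℕ → 𝒲
  complete : CompleteSpace 𝒲
  basis : IsSchauderBasis e
  𝔽 : Subfield ℝ
  countable : (𝔽 : Set ℝ).Countable
  norm_mem : ∀ (s : Finset ℕ) (a : ℕ → ℝ), (∀ i ∈ s, a i ∈ 𝔽) →
    ‖∑ i ∈ s, a i • e i‖ ∈ 𝔽

namespace Frame

variable {𝒲 : Type} [NormedAddCommGroup 𝒲] [NormedSpace ℝ 𝒲] (ctx : Frame 𝒲)

/-- The `𝔽`-linear span of a set of vectors. -/
def fspan (S : Set 𝒲) : Set 𝒲 :=
  {v | ∃ t : Finset 𝒲, ↑t ⊆ S ∧ ∃ c : 𝒲 → ℝ, (∀ w, c w ∈ ctx.𝔽) ∧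
    v = ∑ w ∈ t, c w • w}

/-- The countable `𝔽`-vector space `W` with basis `(e n)`. -/
def W : Set 𝒲 := ctx.fspan (Set.range ctx.e)

/-- `(y n)` is a block sequence with respect to the reference block basis `(b n)`:
a sequence of nonzero vectors of the `𝔽`-span of `(b n)` with successive supports. -/
def BlockSeqRel (b y : ℕ → 𝒲) : Prop :=
  (∀ n, y n ∈ ctx.fspan (Set.range b)) ∧ (∀ n, y n ≠ 0) ∧
  ∃ D : ℕ → Finset ℕ, (∀ n, SuppIn b (y n) (D n)) ∧
    ∀ n, ∀ i ∈ D n, ∀ j ∈ D (n + 1), i < j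

/-- `(y n)` is a block sequence (with respect to the basis `(e n)` of `W`). -/
def IsBlockSeq (y : ℕ → 𝒲) : Prop := ctx.BlockSeqRel ctx.e y

/-- `Y` is a block subspace of `X`: the `𝔽`-span of an infinite block sequence of
vectors of `X`. -/
def IsBlockSubspaceOf (Y X : Set 𝒲) : Prop :=
  ∃ y : ℕ → 𝒲, ctx.IsBlockSeq y ∧ (∀ n, y n ∈ X) ∧ Y = ctx.fspan (Set.range y)

/-- `Y` is a block subspace of `W`. -/
def IsBlockSubspace (Y : Set 𝒲) : Prop := ctx.IsBlockSubspaceOf Y ctx.W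

/-- `F` is a finite-dimensional `𝔽`-subspace of `X`. -/
def IsFinDimIn (F X : Set 𝒲) : Prop :=
  ∃ t : Finset 𝒲, ↑t ⊆ X ∧ F = ctx.fspan ↑t

/-- `n < F`: every vector of `F` is supported on basis vectors of index `> n`. -/
def NatLt (n : ℕ) (F : Set 𝒲) : Prop :=
  ∀ x ∈ F, ∃ s : Finset ℕ, SuppIn ctx.e x s ∧ ∀ i ∈ s, n < i

/-- `V` is an `𝔽`-subspace of `𝒲`. -/
def IsSubspace (V : Set 𝒲) : Prop :=
  (0 : 𝒲) ∈ V ∧ (∀ u v : 𝒲, u ∈ V → v ∈ V → u + v ∈ V) ∧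
    ∀ c : ℝ, c ∈ ctx.𝔽 → ∀ v ∈ V, c • v ∈ V

/-- `V` is infinite-dimensional (not contained in a finitely generated subspace). -/
def IsInfDim (V : Set 𝒲) : Prop :=
  ¬∃ t : Finset 𝒲, V ⊆ ctx.fspan ↑t

/-- Game values of the asymptotic game `F^β_X`, for player II, computed by transfinite
recursion on the ordinal bound.  `IIWinsF X S β Facc vec` states: in the asymptotic game
below `X`, from a position where the vectors `vec` have been played and the
finite-dimensional subspaces played by II span `Facc`, and where I must now play a natural
number together with an ordinal `< β`, player II has a strategy so that the final outcome
lies in `S`. -/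
noncomputable def IIWinsF (X : Set 𝒲) (S : Set (List 𝒲)) :
    Ordinal → Set 𝒲 → List 𝒲 → Prop :=
  WellFounded.fix (C := fun _ : Ordinal => Set 𝒲 → List 𝒲 → Prop) Ordinal.lt_wf
    (fun β ih Facc vec =>
      ∀ n : ℕ, ∀ ξ : Ordinal, ∀ hξ : ξ < β,
        ∃ F : Set 𝒲, ctx.IsFinDimIn F X ∧ ctx.NatLt n F ∧
          ∃ x : 𝒲, x ≠ 0 ∧ x ∈ ctx.fspan (Facc ∪ F) ∧
            (ξ = 0 → vec ++ [x] ∈ S) ∧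
            (ξ ≠ 0 → ih ξ hξ (ctx.fspan (Facc ∪ F)) (vec ++ [x])))

/-- Player II has a strategy in the asymptotic game `F^β_X` to play an outcome in `S`. -/
noncomputable def IIStratF (X : Set 𝒲) (β : Ordinal) (S : Set (List 𝒲)) : Prop :=
  (β = 0 → ([] : List 𝒲) ∈ S) ∧ (β ≠ 0 → ctx.IIWinsF X S β (ctx.fspan ∅) [])

/-- Game values of the asymptotic game `F^β_X` for player I (who plays the integers and
the ordinals, trying to steer the outcome into `S`). -/
noncomputable def IWinsF (X : Set 𝒲) (S : Set (List 𝒲)) :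
    Ordinal → Set 𝒲 → List 𝒲 → Prop :=
  WellFounded.fix (C := fun _ : Ordinal => Set 𝒲 → List 𝒲 → Prop) Ordinal.lt_wf
    (fun β ih Facc vec =>
      ∃ n : ℕ, ∃ ξ : Ordinal, ∃ hξ : ξ < β,
        ∀ F : Set 𝒲, ctx.IsFinDimIn F X → ctx.NatLt n F →
        ∀ x : 𝒲, x ≠ 0 → x ∈ ctx.fspan (Facc ∪ F) →
          (ξ = 0 → vec ++ [x] ∈ S) ∧
          (ξ ≠ 0 → ih ξ hξ (ctx.fspan (Facc ∪ F)) (vec ++ [x])))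

/-- Player I has a strategy in the asymptotic game `F^β_X` to play an outcome in `S`. -/
noncomputable def IStratF (X : Set 𝒲) (β : Ordinal) (S : Set (List 𝒲)) : Prop :=
  (β = 0 → ([] : List 𝒲) ∈ S) ∧ (β ≠ 0 → ctx.IWinsF X S β (ctx.fspan ∅) [])

/-- Game values of the Gowers game `G^α_X` for player II. -/
noncomputable def IIWinsG (X : Set 𝒲) (S : Set (List 𝒲)) :
    Ordinal → Set 𝒲 → List 𝒲 → Prop :=
  WellFounded.fix (C := fun _ : Ordinal => Set 𝒲 → List 𝒲 → Prop) Ordinal.lt_wf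
    (fun α ih Facc vec =>
      ∀ Y : Set 𝒲, ctx.IsBlockSubspaceOf Y X →
      ∀ ξ : Ordinal, ∀ hξ : ξ < α,
        ∃ F : Set 𝒲, ctx.IsFinDimIn F Y ∧
          ∃ x : 𝒲, x ≠ 0 ∧ x ∈ ctx.fspan (Facc ∪ F) ∧
            (ξ = 0 → vec ++ [x] ∈ S) ∧
            (ξ ≠ 0 → ih ξ hξ (ctx.fspan (Facc ∪ F)) (vec ++ [x])))

/-- Player II has a strategy in the generalised Gowers game `G^α_X` to play in `S`. -/
noncomputable def IIStratG (X : Set 𝒲) (α : Ordinal) (S : Set (List 𝒲)) : Prop :=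
  (α = 0 → ([] : List 𝒲) ∈ S) ∧ (α ≠ 0 → ctx.IIWinsG X S α (ctx.fspan ∅) [])

/-- Game values of the adversarial game `A^α_X` for player II (who plays the integers,
the finite-dimensional subspaces `F_l ⊆ Y_l` and the vectors `y_l`). -/
noncomputable def IIWinsA (X : Set 𝒲) (S : Set (List 𝒲)) :
    Ordinal → Set 𝒲 → Set 𝒲 → List 𝒲 → Prop :=
  WellFounded.fix (C := fun _ : Ordinal => Set 𝒲 → Set 𝒲 → List 𝒲 → Prop)
    Ordinal.lt_wf
    (fun α ih Eacc Facc vec =>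
      ∃ n : ℕ,
        ∀ E : Set 𝒲, ctx.IsFinDimIn E X → ctx.NatLt n E →
        ∀ x : 𝒲, x ≠ 0 → x ∈ ctx.fspan (Eacc ∪ E) →
        ∀ Y : Set 𝒲, ctx.IsBlockSubspaceOf Y X →
        ∀ ξ : Ordinal, ∀ hξ : ξ < α,
          ∃ F : Set 𝒲, ctx.IsFinDimIn F Y ∧
            ∃ y : 𝒲, y ≠ 0 ∧ y ∈ ctx.fspan (Facc ∪ F) ∧
              (ξ = 0 → vec ++ [x, y] ∈ S) ∧
              (ξ ≠ 0 → ih ξ hξ (ctx.fspan (Eacc ∪ E)) (ctx.fspan (Facc ∪ F))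
                (vec ++ [x, y])))

/-- Player II has a strategy in the adversarial game `A^α_X` to play in `S`. -/
noncomputable def IIStratA (X : Set 𝒲) (α : Ordinal) (S : Set (List 𝒲)) : Prop :=
  (α = 0 → ([] : List 𝒲) ∈ S) ∧
  (α ≠ 0 → ctx.IIWinsA X S α (ctx.fspan ∅) (ctx.fspan ∅) [])

/-- Game values of the adversarial game `B^α_X` for player I (who plays the
finite-dimensional subspaces `E_l ⊆ Y_l`, the vectors `x_l`, the integers and the
ordinals). -/
noncomputable def IWinsB (X : Set 𝒲) (S : Set (List 𝒲)) :
    Ordinal → Set 𝒲 → Set 𝒲 → List 𝒲 → Prop :=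
  WellFounded.fix (C := fun _ : Ordinal => Set 𝒲 → Set 𝒲 → List 𝒲 → Prop)
    Ordinal.lt_wf
    (fun α ih Eacc Facc vec =>
      ∀ Y : Set 𝒲, ctx.IsBlockSubspaceOf Y X →
        ∃ E : Set 𝒲, ctx.IsFinDimIn E Y ∧
          ∃ x : 𝒲, x ≠ 0 ∧ x ∈ ctx.fspan (Eacc ∪ E) ∧
            ∃ n : ℕ, ∃ ξ : Ordinal, ∃ hξ : ξ < α,
              ∀ F : Set 𝒲, ctx.IsFinDimIn F X → ctx.NatLt n F →
              ∀ y : 𝒲, y ≠ 0 → y ∈ ctx.fspan (Facc ∪ F) →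
                (ξ = 0 → vec ++ [x, y] ∈ S) ∧
                (ξ ≠ 0 → ih ξ hξ (ctx.fspan (Eacc ∪ E)) (ctx.fspan (Facc ∪ F))
                  (vec ++ [x, y])))

/-- Player I has a strategy in the adversarial game `B^α_X` to play in `S`. -/
noncomputable def IStratB (X : Set 𝒲) (α : Ordinal) (S : Set (List 𝒲)) : Prop :=
  (α = 0 → ([] : List 𝒲) ∈ S) ∧
  (α ≠ 0 → ctx.IWinsB X S α (ctx.fspan ∅) (ctx.fspan ∅) [])

/-- Game values of the adversarial game `B^α_X` for player II (who plays the block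
subspaces `Y_l`, the finite-dimensional subspaces `F_l` and the vectors `y_l`). -/
noncomputable def IIWinsB (X : Set 𝒲) (S : Set (List 𝒲)) :
    Ordinal → Set 𝒲 → Set 𝒲 → List 𝒲 → Prop :=
  WellFounded.fix (C := fun _ : Ordinal => Set 𝒲 → Set 𝒲 → List 𝒲 → Prop)
    Ordinal.lt_wf
    (fun α ih Eacc Facc vec =>
      ∃ Y : Set 𝒲, ctx.IsBlockSubspaceOf Y X ∧
        ∀ E : Set 𝒲, ctx.IsFinDimIn E Y →
        ∀ x : 𝒲, x ≠ 0 → x ∈ ctx.fspan (Eacc ∪ E) →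
        ∀ n : ℕ, ∀ ξ : Ordinal, ∀ hξ : ξ < α,
          ∃ F : Set 𝒲, ctx.IsFinDimIn F X ∧ ctx.NatLt n F ∧
            ∃ y : 𝒲, y ≠ 0 ∧ y ∈ ctx.fspan (Facc ∪ F) ∧
              (ξ = 0 → vec ++ [x, y] ∈ S) ∧
              (ξ ≠ 0 → ih ξ hξ (ctx.fspan (Eacc ∪ E)) (ctx.fspan (Facc ∪ F))
                (vec ++ [x, y])))

/-- Player II has a strategy in the adversarial game `B^α_X` to play in `S`. -/
noncomputable def IIStratB (X : Set 𝒲) (α : Ordinal) (S : Set (List 𝒲)) : Prop :=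
  (α = 0 → ([] : List 𝒲) ∈ S) ∧
  (α ≠ 0 → ctx.IIWinsB X S α (ctx.fspan ∅) (ctx.fspan ∅) [])

end Frame

end Rosendal

namespace Rosendal

/-! To answer a single move `(n, ξ)` of player I in `F^α_X`, player II runs finitely many rounds of
her strategy in `F^{ω·α}_X`, against the integer `n` and the ordinals
`ω·ξ + (N - 1), …, ω·ξ + 1, ω·ξ`, where `N` is so large that the next vector `z m` lies in the
span of `y 0, …, y (N - 1)`.  She then plays the combination of the vectors obtained so far that
has the coefficients of `z m` over `y`, and `K`-equivalence passes to such combinations. -/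

section Ordinals

open Ordinal

theorem omega0_mul_add_natCast_le {ξ β : Ordinal} (hξ : ξ < β) (n : ℕ) : ω * ξ + n ≤ ω * β :=
  calc
    ω * ξ + n ≤ ω * ξ + ω := by gcongr; exact (natCast_lt_omega0 n).le
    _ = ω * Order.succ ξ := (mul_succ ω ξ).symm
    _ ≤ ω * β := by gcongr; exact Order.succ_le_of_lt hξ

end Ordinals

section Combinations

variable {R M : Type*} [Semiring R] [AddCommMonoid M] [Module R M]

/-- The `m` linear combinations of the entries of `v` with coefficient vectors `c 0, …, c (m - 1)`;
indices past the end of `v` contribute zero. -/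
noncomputable def combinations (c : ℕ → ℕ →₀ R) (m : ℕ) (v : List M) : List M :=
  (List.range m).map fun l => Finsupp.linearCombination R (fun i => v.getD i 0) (c l)

@[simp]
theorem length_combinations (c : ℕ → ℕ →₀ R) (m : ℕ) (v : List M) :
    (combinations c m v).length = m := by
  simp only [combinations, List.length_map, List.length_range]

theorem combinations_getD (c : ℕ → ℕ →₀ R) {m : ℕ} (v : List M) {l : ℕ} (hl : l < m) :
    (combinations c m v).getD l 0 =
      Finsupp.linearCombination R (fun i => v.getD i 0) (c l) := by
  rw [List.getD_eq_getElem _ _ (by simpa using hl)]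
  simp only [combinations, List.getElem_map, List.getElem_range]

theorem combinations_succ (c : ℕ → ℕ →₀ R) (m : ℕ) (v : List M) :
    combinations c (m + 1) v =
      combinations c m v ++ [Finsupp.linearCombination R (fun i => v.getD i 0) (c m)] := by
  simp only [combinations, List.range_succ, List.map_append, List.map_cons, List.map_nil]

theorem combinations_append {c : ℕ → ℕ →₀ R} {m : ℕ} {v : List M}
    (hc : ∀ l < m, ∀ i ∈ (c l).support, i < v.length) (w : List M) :
    combinations c m (v ++ w) = combinations c m v := by
  refine List.map_congr_left fun l hl => Finset.sum_congr rfl fun i hi => ?_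
  simp only [List.getD_append v w 0 i (hc l (List.mem_range.1 hl) i hi)]

theorem combinations_single_length (v : List M) :
    combinations (fun i => Finsupp.single i (1 : R)) v.length v = v := by
  refine List.ext_getElem (length_combinations _ _ _) fun i _ hi => ?_
  simp [combinations, hi]

theorem linearCombination_getD_mem {p : Submodule R M} {v : List M} (hv : ∀ x ∈ v, x ∈ p)
    (c : ℕ →₀ R) : Finsupp.linearCombination R (fun i => v.getD i 0) c ∈ p := by
  have hget (i : ℕ) : v.getD i 0 ∈ p := by
    rcases lt_or_ge i v.length with hi | hi
    · rw [List.getD_eq_getElem _ _ hi]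
      exact hv _ (List.getElem_mem hi)
    · rw [List.getD_eq_default _ _ hi]
      exact p.zero_mem
  exact p.sum_mem fun i _ => p.smul_mem _ (hget i)

end Combinations

section Equivalence

variable {𝒲 : Type} [NormedAddCommGroup 𝒲] [NormedSpace ℝ 𝒲] {K : ℝ} {y : ℕ → 𝒲}

theorem SeqEquiv.congr_left {k : ℕ} {x x' : ℕ → 𝒲} (h : SeqEquiv K k x y)
    (hx : ∀ i < k, x' i = x i) : SeqEquiv K k x' y := by
  intro a
  rw [Finset.sum_congr rfl fun i hi => congrArg (a i • ·) (hx i (Finset.mem_range.1 hi))]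
  exact h a

theorem SeqEquiv.ne_zero {k : ℕ} {x : ℕ → 𝒲} (h : SeqEquiv K k x y) {i : ℕ} (hi : i < k)
    (hy : y i ≠ 0) : x i ≠ 0 := by
  intro hx
  have hle : ‖y i‖ ≤ K * ‖x i‖ := by
    simpa [Pi.single_apply, ite_smul, hi] using (h (Pi.single i 1)).2
  rw [hx, norm_zero, mul_zero] at hle
  exact hy (norm_le_zero_iff.1 hle)

theorem OutcomeEquiv.zero_notMem {l : List 𝒲} (h : OutcomeEquiv K l y) (hy : ∀ i, y i ≠ 0) :
    (0 : 𝒲) ∉ l := by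
  intro h0
  obtain ⟨i, hi, hli⟩ := List.getElem_of_mem h0
  refine SeqEquiv.ne_zero h hi (hy i) ?_
  rw [List.getD_eq_getElem _ _ hi, hli]

section Scalars

variable {R : Type*} [CommSemiring R] [Algebra R ℝ] [Module R 𝒲] [IsScalarTower R ℝ 𝒲]

theorem sum_smul_linearCombination {c : ℕ → ℕ →₀ R} {m L : ℕ}
    (hc : ∀ l < m, ∀ i ∈ (c l).support, i < L) (b : ℕ → ℝ) (f : ℕ → 𝒲) :
    ∑ l ∈ Finset.range m, b l • Finsupp.linearCombination R f (c l) =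
      ∑ i ∈ Finset.range L, (∑ l ∈ Finset.range m, b l * algebraMap R ℝ (c l i)) • f i := by
  simp only [Finset.sum_smul]
  rw [Finset.sum_comm]
  refine Finset.sum_congr rfl fun l hl => ?_
  have hsupp : (c l).support ⊆ Finset.range L := fun i hi =>
    Finset.mem_range.2 (hc l (Finset.mem_range.1 hl) i hi)
  rw [Finsupp.linearCombination_apply, Finsupp.sum_of_support_subset _ hsupp _ (by simp),
    Finset.smul_sum]
  simp only [mul_smul, algebraMap_smul]

theorem SeqEquiv.linearCombination {c : ℕ → ℕ →₀ R} {m L : ℕ} {x : ℕ → 𝒲}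
    (h : SeqEquiv K L x y) (hc : ∀ l < m, ∀ i ∈ (c l).support, i < L) :
    SeqEquiv K m (fun l => Finsupp.linearCombination R x (c l))
      (fun l => Finsupp.linearCombination R y (c l)) := by
  intro b
  simp only [sum_smul_linearCombination hc]
  exact h _

theorem OutcomeEquiv.map_combinations {c : ℕ → ℕ →₀ R} {m : ℕ} {v : List 𝒲}
    (h : OutcomeEquiv K v y) (hc : ∀ l < m, ∀ i ∈ (c l).support, i < v.length) :
    OutcomeEquiv K (combinations c m v) (fun l => Finsupp.linearCombination R y (c l)) := by
  rw [OutcomeEquiv, length_combinations]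
  exact (SeqEquiv.linearCombination h hc).congr_left fun l hl => combinations_getD c v hl

end Scalars

theorem OutcomeEquiv.of_isPrefix {l l' : List 𝒲} (hl : l <+: l') (h : OutcomeEquiv K l' y) :
    OutcomeEquiv K l y := by
  obtain ⟨t, rfl⟩ := hl
  have hc : ∀ j < l.length, ∀ i ∈ (Finsupp.single j (1 : ℝ)).support, i < l.length := by
    intro j hj i hi
    rwa [Finset.mem_singleton.1 (Finsupp.support_single_subset hi)]
  have hle : l.length ≤ (l ++ t).length := (List.prefix_append l t).length_le
  have h' := h.map_combinations fun j hj i hi => (hc j hj i hi).trans_le hle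
  rw [combinations_append hc, combinations_single_length] at h'
  simpa only [Finsupp.linearCombination_single, one_smul] using h'

end Equivalence

namespace Frame

variable {𝒲 : Type} [NormedAddCommGroup 𝒲] [NormedSpace ℝ 𝒲] {ctx : Frame 𝒲}

section Spans

theorem fspan_eq_coe_span (S : Set 𝒲) : ctx.fspan S = (Submodule.span ctx.𝔽 S : Set 𝒲) := by
  ext v
  constructor
  · rintro ⟨t, ht, c, hc, rfl⟩
    exact Submodule.sum_mem _ fun w hw =>
      Submodule.smul_mem _ (⟨c w, hc w⟩ : ctx.𝔽) (Submodule.subset_span (ht hw))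
  · intro hv
    obtain ⟨f, t, htS, -, hsum⟩ := Submodule.mem_span_iff_exists_finset_subset.1 hv
    exact ⟨t, htS, fun w => (f w : ℝ), fun w => (f w).2, hsum.symm⟩

theorem fspan_coe_union (p : Submodule ctx.𝔽 𝒲) (S : Set 𝒲) :
    ctx.fspan (p ∪ S) = (p ⊔ Submodule.span ctx.𝔽 S : Submodule ctx.𝔽 𝒲) := by
  rw [fspan_eq_coe_span, Submodule.span_union, Submodule.span_eq]

theorem natLt_iff_subset_span {n : ℕ} {F : Set 𝒲} :
    ctx.NatLt n F ↔ F ⊆ Submodule.span ℝ (ctx.e '' Set.Ioi n) := by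
  refine forall₂_congr fun x _ => ⟨?_, fun hx => ?_⟩
  · rintro ⟨s, ⟨a, rfl⟩, hs⟩
    exact Submodule.sum_mem _ fun i hi =>
      Submodule.smul_mem _ _ (Submodule.subset_span ⟨i, hs i hi, rfl⟩)
  · obtain ⟨a, ha, rfl⟩ := (Finsupp.mem_span_image_iff_linearCombination ℝ).1 hx
    exact ⟨a.support, ⟨a, rfl⟩, fun i hi => ha hi⟩

/-- The subspaces `q` that player II may play in `F^β_X` in reply to the integer `n`, that is, the
finite-dimensional `𝔽`-subspaces of `X` with `n < q`. -/
def IsLegalReply (X : Set 𝒲) (n : ℕ) (q : Submodule ctx.𝔽 𝒲) : Prop :=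
  ctx.IsFinDimIn q X ∧ ctx.NatLt n q

variable {X : Set 𝒲} {n : ℕ}

theorem isLegalReply_bot : IsLegalReply X n (⊥ : Submodule ctx.𝔽 𝒲) := by
  refine ⟨⟨∅, by simp, by simp [fspan_eq_coe_span]⟩, natLt_iff_subset_span.2 ?_⟩
  rintro _ rfl
  exact Submodule.zero_mem _

theorem IsLegalReply.sup {q q' : Submodule ctx.𝔽 𝒲} (hq : IsLegalReply X n q)
    (hq' : IsLegalReply X n q') : IsLegalReply X n (q ⊔ q') := by
  classical
  obtain ⟨⟨t, ht, hqt⟩, hn⟩ := hq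
  obtain ⟨⟨t', ht', hqt'⟩, hn'⟩ := hq'
  rw [fspan_eq_coe_span, SetLike.coe_set_eq] at hqt hqt'
  constructor
  · refine ⟨t ∪ t', by simp [ht, ht'], ?_⟩
    rw [fspan_eq_coe_span, Finset.coe_union, Submodule.span_union, hqt, hqt']
  · rw [natLt_iff_subset_span] at hn hn' ⊢
    exact sup_le (c := (Submodule.span ℝ (ctx.e '' Set.Ioi n)).restrictScalars ctx.𝔽) hn hn'

end Spans

section Game

/-- Player II wins from the position of the asymptotic game below `X` in which the vectors `vec`
and subspaces with sum `p` have been played and `β` bounds the next ordinal.  As opposed to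
`IIWinsF`, this includes the positions with `β = 0`, where the game is over. -/
def IIWinsAt (X : Set 𝒲) (S : Set (List 𝒲)) (β : Ordinal) (p : Submodule ctx.𝔽 𝒲)
    (vec : List 𝒲) : Prop :=
  (β = 0 → vec ∈ S) ∧ (β ≠ 0 → ctx.IIWinsF X S β p vec)

variable {X : Set 𝒲} {S : Set (List 𝒲)} {β : Ordinal} {p : Submodule ctx.𝔽 𝒲} {vec : List 𝒲}

theorem iiStratF_iff : ctx.IIStratF X β S ↔ IIWinsAt X S β (⊥ : Submodule ctx.𝔽 𝒲) [] := by
  rw [IIStratF, fspan_eq_coe_span, Submodule.span_empty, IIWinsAt]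

theorem iiWinsF_iff : ctx.IIWinsF X S β p vec ↔
    ∀ n : ℕ, ∀ ξ < β, ∃ q : Submodule ctx.𝔽 𝒲, IsLegalReply X n q ∧
      ∃ x ∈ p ⊔ q, x ≠ 0 ∧ IIWinsAt X S ξ (p ⊔ q) (vec ++ [x]) := by
  rw [IIWinsF, WellFounded.fix_eq]
  refine forall₃_congr fun n ξ _ => ⟨?_, ?_⟩
  · rintro ⟨F, ⟨t, ht, rfl⟩, hn, x, hx0, hx, hwin⟩
    rw [fspan_coe_union, fspan_eq_coe_span, Submodule.span_span] at hx hwin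
    rw [fspan_eq_coe_span] at hn
    exact ⟨_, ⟨⟨t, ht, (fspan_eq_coe_span _).symm⟩, hn⟩, x, hx, hx0, hwin⟩
  · rintro ⟨q, ⟨hfin, hn⟩, x, hx, hx0, hwin⟩
    refine ⟨q, hfin, hn, x, hx0, ?_⟩
    rw [fspan_coe_union, Submodule.span_eq]
    exact ⟨hx, hwin⟩

theorem IIWinsAt.mem (hS : ∀ ⦃l l'⦄, l <+: l' → l' ∈ S → l ∈ S) (h : IIWinsAt X S β p vec) :
    vec ∈ S := by
  rcases eq_or_ne β 0 with hβ | hβ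
  · exact h.1 hβ
  · obtain ⟨q, -, x, -, -, hwin⟩ := iiWinsF_iff.1 (h.2 hβ) 0 0 (pos_iff_ne_zero.2 hβ)
    exact hS (List.prefix_append vec [x]) (hwin.1 rfl)

theorem IIWinsAt.mono (hS : ∀ ⦃l l'⦄, l <+: l' → l' ∈ S → l ∈ S) (h : IIWinsAt X S β p vec)
    {β' : Ordinal} (hβ : β' ≤ β) : IIWinsAt X S β' p vec := by
  refine ⟨fun _ => h.mem hS, fun hβ' => iiWinsF_iff.2 fun n ξ hξ => ?_⟩
  exact iiWinsF_iff.1 (h.2 (hβ'.bot_lt.trans_le hβ).ne') n ξ (hξ.trans_le hβ)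

theorem IIWinsAt.exists_append (n : ℕ) {γ : Ordinal} {j : ℕ} (h : IIWinsAt X S (γ + j) p vec) :
    ∃ q : Submodule ctx.𝔽 𝒲, IsLegalReply X n q ∧ ∃ xs : List 𝒲, xs.length = j ∧
      (∀ x ∈ xs, x ∈ p ⊔ q) ∧ IIWinsAt X S γ (p ⊔ q) (vec ++ xs) := by
  induction j generalizing p vec with
  | zero => exact ⟨⊥, isLegalReply_bot, [], rfl, by simp, by simpa using h⟩
  | succ j ih =>
    have hlt : γ + j < γ + (j + 1 : ℕ) := by gcongr; exact j.lt_succ_self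
    obtain ⟨q, hq, x, hx, -, hwin⟩ := iiWinsF_iff.1 (h.2 hlt.ne_bot) n _ hlt
    obtain ⟨q', hq', xs, hlen, hxs, hwin'⟩ := ih hwin
    rw [sup_assoc] at hxs hwin'
    have hx' : x ∈ p ⊔ (q ⊔ q') := sup_le_sup_left le_sup_left p hx
    exact ⟨q ⊔ q', hq.sup hq', x :: xs, by rw [List.length_cons, hlen],
      List.forall_mem_cons.2 ⟨hx', hxs⟩, by simpa using hwin'⟩

theorem IIWinsAt.map_combinations {S' : Set (List 𝒲)} {c : ℕ → ℕ →₀ ctx.𝔽}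
    (hS : ∀ ⦃l l'⦄, l <+: l' → l' ∈ S → l ∈ S) (hS' : ∀ l ∈ S', (0 : 𝒲) ∉ l)
    (hSS' : ∀ m, ∀ l ∈ S, (∀ k < m, ∀ i ∈ (c k).support, i < l.length) →
      combinations c m l ∈ S')
    {m : ℕ} (hc : ∀ k < m, ∀ i ∈ (c k).support, i < vec.length) (hvec : ∀ x ∈ vec, x ∈ p)
    (h : IIWinsAt X S (Ordinal.omega0 * β) p vec) :
    IIWinsAt X S' β p (combinations c m vec) := by
  induction β using WellFoundedLT.induction generalizing m p vec with
  | ind β ih =>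
  refine ⟨fun _ => hSS' m vec (h.mem hS) hc, fun _ => iiWinsF_iff.2 fun n ξ hξ => ?_⟩
  obtain ⟨N, hN⟩ : ∃ N, ∀ i ∈ (c m).support, i < N :=
    ⟨_, fun i hi => Nat.lt_succ_of_le (Finset.le_sup (f := id) hi)⟩
  obtain ⟨q, hq, xs, rfl, hxs, hwin⟩ :=
    (h.mono hS (omega0_mul_add_natCast_le hξ N)).exists_append n
  have hvec' : ∀ x ∈ vec ++ xs, x ∈ p ⊔ q :=
    List.forall_mem_append.2 ⟨fun x hx => le_sup_left (a := p) (hvec x hx), hxs⟩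
  have hc' : ∀ k < m + 1, ∀ i ∈ (c k).support, i < (vec ++ xs).length := by
    intro k hk i hi
    rw [List.length_append]
    rcases Nat.lt_succ_iff_lt_or_eq.1 hk with hk | rfl
    · exact (hc k hk i hi).trans_le (Nat.le_add_right _ _)
    · exact (hN i hi).trans_le (Nat.le_add_left _ _)
  have happend := combinations_succ c m (vec ++ xs)
  rw [combinations_append hc] at happend
  have hmem := hSS' (m + 1) _ (hwin.mem hS) hc'
  refine ⟨q, hq, _, linearCombination_getD_mem hvec' (c m), fun h0 => hS' _ hmem ?_, ?_⟩
  · rw [happend, h0]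
    exact List.mem_concat_self
  · rw [← happend]
    exact ih ξ hξ hc' hvec' hwin

end Game

end Frame

theorem passing_to_block_sequences_general
    {𝒲 : Type} [NormedAddCommGroup 𝒲] [NormedSpace ℝ 𝒲] {ctx : Frame 𝒲} {X : Set 𝒲}
    {y z : ℕ → 𝒲} {α : Ordinal} {K : ℝ}
    (h : ctx.IIStratF X (Ordinal.omega0 * α) {l | OutcomeEquiv K l y})
    (hz : ∀ n, z n ≠ 0) (hzy : ∀ n, z n ∈ ctx.fspan (Set.range y)) :
    ctx.IIStratF X α {l | OutcomeEquiv K l z} := by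
  simp only [Frame.fspan_eq_coe_span, SetLike.mem_coe,
    Finsupp.mem_span_range_iff_exists_finsupp] at hzy
  choose c hc using hzy
  obtain rfl : (fun l => Finsupp.linearCombination ctx.𝔽 y (c l)) = z := funext hc
  rw [Frame.iiStratF_iff] at h ⊢
  exact h.map_combinations (m := 0) (fun _ _ => OutcomeEquiv.of_isPrefix)
    (fun _ hl => OutcomeEquiv.zero_notMem hl hz) (fun _ _ hl => OutcomeEquiv.map_combinations hl)
    (by simp) (by simp)

/-- If II has a strategy in `F^{ω·α}_X` to play outcomes
`K`-equivalent to the block sequence `(y n)` in `W`, then for any block sequence `(z n)`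
of vectors in the span `[y n]`, II has a strategy in `F^α_X` to play outcomes
`K`-equivalent to `(z n)`. -/
theorem passing_to_block_sequences
    (𝒲 : Type) [NormedAddCommGroup 𝒲] [NormedSpace ℝ 𝒲] (ctx : Frame 𝒲)
    (X : Set 𝒲) (hX : ctx.IsBlockSubspace X)
    (y : ℕ → 𝒲) (hy : ctx.IsBlockSeq y)
    (α : Ordinal) (hα : α < (Cardinal.aleph 1).ord) (K : ℝ) (hK : 1 ≤ K)
    (h : ctx.IIStratF X (Ordinal.omega0 * α) {l | OutcomeEquiv K l y}) :
    ∀ z : ℕ → 𝒲, ctx.IsBlockSeq z → (∀ n, z n ∈ ctx.fspan (Set.range y)) →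
      ctx.IIStratF X α {l | OutcomeEquiv K l z} :=
  fun _ hz hzy => passing_to_block_sequences_general h hz.2.1 hzy

end Rosendal
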